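/- arXiv:1604.07014 — 6 statements merged into one kernel-verified Lean document; each statement's English description precedes it below -/
import Mathlib

section
/- Let ε > 0, L > 0, and define E[θ] = ∫_0^L ( θ'(R)²/2 + ε·cos(2θ(R)) ) dR on continuously differentiable functions θ : [0,L] → ℝ. Then the constant function θ ≡ 0 (the straight equilibrium) is not a local minimum of E: for every δ > 0 there exists a continuously differentiable φ : [0,L] → ℝ with sup_{R ∈ [0,L]} (|φ(R)| + |φ'(R)|) < δ and E[φ] < E[0]. -/
/-- The non-dimensional ladder energy with `Û₀ = 0`:
`E[θ] = ∫_0^L (θ'(R)²/2 + ε·cos(2θ(R))) dR`. -/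
noncomputable def ladderEnergy (ε L : ℝ) (θ : ℝ → ℝ) : ℝ :=
  ∫ R in (0 : ℝ)..L, (deriv θ R ^ 2 / 2 + ε * Real.cos (2 * θ R))

/-! A constant `θ` has no gradient energy, and `θ = 0` sits at a maximum of the potential
`ε cos 2θ`, so a small constant displacement already lowers the energy. -/

theorem ladderEnergy_const (ε L c : ℝ) :
    ladderEnergy ε L (fun _ => c) = ε * L * Real.cos (2 * c) := by
  simp [ladderEnergy, mul_assoc]

theorem ladderEnergy_const_lt_const_zero_iff {ε L : ℝ} (hεL : 0 < ε * L) (c : ℝ) :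
    ladderEnergy ε L (fun _ => c) < ladderEnergy ε L (fun _ => 0) ↔ Real.sin c ≠ 0 := by
  have hcos : Real.cos (2 * c) < 1 ↔ Real.sin c ≠ 0 := by
    rw [Real.cos_two_mul_eq_one_sub, sub_lt_self_iff, mul_pos_iff_of_pos_left two_pos,
      sq_pos_iff]
  rw [ladderEnergy_const, ladderEnergy_const, mul_lt_mul_iff_right₀ hεL, mul_zero,
    Real.cos_zero, hcos]

/-- The straight equilibrium `θ ≡ 0` is not a local minimum of the ladder energy. -/
theorem stmt_5 (ε L : ℝ) (hε : 0 < ε) (hL : 0 < L) :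
    ∀ δ > 0, ∃ φ : ℝ → ℝ, ContDiff ℝ 1 φ ∧
      (∀ R ∈ Set.Icc 0 L, |φ R| + |deriv φ R| < δ) ∧
      ladderEnergy ε L φ < ladderEnergy ε L (fun _ => (0 : ℝ)) := by
  intro δ hδ
  obtain ⟨c, hc_pos, hc_lt⟩ := exists_between (lt_min hδ Real.pi_pos)
  obtain ⟨hcδ, hcπ⟩ := lt_min_iff.mp hc_lt
  have hsin : Real.sin c ≠ 0 := (Real.sin_pos_of_pos_of_lt_pi hc_pos hcπ).ne'
  refine ⟨fun _ => c, contDiff_const, fun R _ => ?_,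
    (ladderEnergy_const_lt_const_zero_iff (mul_pos hε hL) c).mpr hsin⟩
  simpa [abs_of_pos hc_pos] using hcδ
end

section
/- Let ε > 0 and for θ₀ ∈ (0, π/2) define L_p(θ₀) = ∫_{−θ₀}^{θ₀} dθ / √( 2ε·(cos(2θ) − cos(2θ₀)) ). Then L_p(θ₀) tends to +∞ as θ₀ → (π/2)⁻. -/
open Filter

/-- The length `L_p(θ₀)` of the ladder admitting a single-perversion equilibrium
of amplitude `θ₀`. -/
noncomputable def Lp (ε θ₀ : ℝ) : ℝ :=
  ∫ θ in (-θ₀)..θ₀, 1 / Real.sqrt (2 * ε * (Real.cos (2 * θ) - Real.cos (2 * θ₀)))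

/-!
Since `cos 2θ - cos 2θ₀ = 2 (sin² θ₀ - sin² θ)`, the integrand of `L_p(θ₀)` is
`1 / (2 √ε √(sin² θ₀ - sin² θ))`. It is integrable despite its endpoint singularities because
`cos θ / √(sin² θ₀ - sin² θ)` is the nonnegative derivative of `arcsin (sin θ / sin θ₀)`, which is
continuous up to `±θ₀`, and `cos θ` is bounded away from zero for `|θ| ≤ θ₀ < π / 2`.
Bounding `sin² θ₀` by `1` gives `1 / √(sin² θ₀ - sin² θ) ≥ sec θ`, and `sec` has the antiderivative
`arsinh (tan θ)`. Hence `L_p(θ₀) ≥ arsinh (tan θ₀) / √ε`, which diverges as `θ₀ → π / 2`.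
-/

section Trigonometry

open Real Set

theorem cos_two_mul_sub_cos_two_mul (x y : ℝ) :
    cos (2 * x) - cos (2 * y) = 2 * (sin y ^ 2 - sin x ^ 2) := by
  rw [cos_two_mul, cos_two_mul, cos_sq', cos_sq']
  ring

theorem abs_sin_lt_sin {x a : ℝ} (hx : x ∈ Ioo (-a) a) (ha : a ≤ π / 2) : |sin x| < sin a := by
  refine abs_lt.2 ⟨?_, sin_lt_sin_of_lt_of_le_pi_div_two (by linarith [hx.1]) ha hx.2⟩
  rw [← sin_neg]
  exact sin_lt_sin_of_lt_of_le_pi_div_two (by linarith) (by linarith [hx.2]) hx.1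

theorem cos_pos_of_mem_uIcc {a b x : ℝ} (ha : a ∈ Ioo (-(π / 2)) (π / 2))
    (hb : b ∈ Ioo (-(π / 2)) (π / 2)) (hx : x ∈ uIcc a b) : 0 < cos x :=
  cos_pos_of_mem_Ioo (ordConnected_Ioo.uIcc_subset ha hb hx)

theorem continuousOn_inv_cos_uIcc {a b : ℝ} (ha : a ∈ Ioo (-(π / 2)) (π / 2))
    (hb : b ∈ Ioo (-(π / 2)) (π / 2)) : ContinuousOn (fun x => (cos x)⁻¹) (uIcc a b) :=
  continuous_cos.continuousOn.inv₀ fun _ hx => (cos_pos_of_mem_uIcc ha hb hx).ne'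

theorem hasDerivAt_arsinh_tan {x : ℝ} (hx : 0 < cos x) :
    HasDerivAt (fun y => arsinh (tan y)) (cos x)⁻¹ x := by
  refine (hasDerivAt_tan hx.ne').arsinh.congr_deriv ?_
  rw [inv_sqrt_one_add_tan_sq hx, smul_eq_mul]
  field_simp

theorem integral_inv_cos {a b : ℝ} (ha : a ∈ Ioo (-(π / 2)) (π / 2))
    (hb : b ∈ Ioo (-(π / 2)) (π / 2)) :
    ∫ x in a..b, (cos x)⁻¹ = arsinh (tan b) - arsinh (tan a) :=
  intervalIntegral.integral_eq_sub_of_hasDerivAt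
    (fun _ hx => hasDerivAt_arsinh_tan (cos_pos_of_mem_uIcc ha hb hx))
    (continuousOn_inv_cos_uIcc ha hb).intervalIntegrable

theorem tendsto_arsinh_atTop : Tendsto arsinh atTop atTop :=
  sinhOrderIso.symm.tendsto_atTop

theorem tendsto_arsinh_tan_pi_div_two :
    Tendsto (fun x => arsinh (tan x)) (nhdsWithin (π / 2) (Iio (π / 2))) atTop :=
  tendsto_arsinh_atTop.comp tendsto_tan_pi_div_two

theorem hasDerivAt_arcsin_sin_div {c x : ℝ} (h : |sin x| < c) :
    HasDerivAt (fun y => arcsin (sin y / c)) (cos x / √(c ^ 2 - sin x ^ 2)) x := by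
  have hc : 0 < c := (abs_nonneg _).trans_lt h
  have hlt : |sin x / c| < 1 := by rwa [abs_div, abs_of_pos hc, div_lt_one hc]
  have hsqrt : √(1 - (sin x / c) ^ 2) = √(c ^ 2 - sin x ^ 2) / c := by
    rw [div_pow, one_sub_div (by positivity), sqrt_div' _ (by positivity), sqrt_sq hc.le]
  have hderiv := (hasDerivAt_arcsin (abs_lt.1 hlt).1.ne' (abs_lt.1 hlt).2.ne).comp x
    ((hasDerivAt_sin x).div_const c)
  refine hderiv.congr_deriv ?_
  rw [hsqrt]
  field_simp

end Trigonometry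

section SingularIntegral

open Real Set MeasureTheory

variable {a : ℝ}

theorem intervalIntegrable_cos_div_sqrt_sin_sq_sub_sin_sq (ha₀ : 0 ≤ a) (ha : a ≤ π / 2) :
    IntervalIntegrable (fun x => cos x / √(sin a ^ 2 - sin x ^ 2)) volume (-a) a := by
  have hminmax : Ioo (min (-a) a) (max (-a) a) = Ioo (-a) a := by
    rw [min_eq_left (by linarith), max_eq_right (by linarith)]
  apply intervalIntegral.intervalIntegrable_deriv_of_nonneg (g := fun x => arcsin (sin x / sin a))
  · fun_prop
  · rw [hminmax]
    exact fun x hx => hasDerivAt_arcsin_sin_div (abs_sin_lt_sin hx ha)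
  · rw [hminmax]
    exact fun x hx => div_nonneg
      (cos_nonneg_of_neg_pi_div_two_le_of_le (by linarith [hx.1]) (by linarith [hx.2]))
      (sqrt_nonneg _)

theorem intervalIntegrable_inv_sqrt_sin_sq_sub_sin_sq (ha₀ : 0 ≤ a) (ha : a < π / 2) :
    IntervalIntegrable (fun x => (√(sin a ^ 2 - sin x ^ 2))⁻¹) volume (-a) a := by
  have ha_mem : a ∈ Ioo (-(π / 2)) (π / 2) := ⟨by linarith, ha⟩
  have hneg_mem : -a ∈ Ioo (-(π / 2)) (π / 2) := ⟨by linarith, by linarith⟩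
  refine ((intervalIntegrable_cos_div_sqrt_sin_sq_sub_sin_sq ha₀ ha.le).continuousOn_mul
    (continuousOn_inv_cos_uIcc hneg_mem ha_mem)).congr fun x hx => ?_
  have hcos := cos_pos_of_mem_uIcc hneg_mem ha_mem (uIoc_subset_uIcc hx)
  rw [div_eq_mul_inv, inv_mul_cancel_left₀ hcos.ne']

theorem inv_cos_le_inv_sqrt_sin_sq_sub_sin_sq {x : ℝ} (hx : x ∈ Ioo (-a) a) (ha : a ≤ π / 2) :
    (cos x)⁻¹ ≤ (√(sin a ^ 2 - sin x ^ 2))⁻¹ := by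
  have hpos : 0 < sin a ^ 2 - sin x ^ 2 :=
    sub_pos.2 (sq_lt_sq.2 ((abs_sin_lt_sin hx ha).trans_le (le_abs_self _)))
  rw [cos_eq_sqrt_one_sub_sin_sq (by linarith [hx.1]) (by linarith [hx.2])]
  gcongr
  exact sin_sq_le_one a

theorem two_mul_arsinh_tan_le_integral (ha₀ : 0 ≤ a) (ha : a < π / 2) :
    2 * arsinh (tan a) ≤ ∫ x in (-a)..a, (√(sin a ^ 2 - sin x ^ 2))⁻¹ := by
  have ha_mem : a ∈ Ioo (-(π / 2)) (π / 2) := ⟨by linarith, ha⟩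
  have hneg_mem : -a ∈ Ioo (-(π / 2)) (π / 2) := ⟨by linarith, by linarith⟩
  calc 2 * arsinh (tan a) = ∫ x in (-a)..a, (cos x)⁻¹ := by
        rw [integral_inv_cos hneg_mem ha_mem, tan_neg, arsinh_neg]
        ring
    _ ≤ ∫ x in (-a)..a, (√(sin a ^ 2 - sin x ^ 2))⁻¹ :=
        intervalIntegral.integral_mono_on_of_le_Ioo (by linarith)
          (continuousOn_inv_cos_uIcc hneg_mem ha_mem).intervalIntegrable
          (intervalIntegrable_inv_sqrt_sin_sq_sub_sin_sq ha₀ ha)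
          fun _ hx => inv_cos_le_inv_sqrt_sin_sq_sub_sin_sq hx ha.le

end SingularIntegral

section LadderLength

open Real

variable {ε : ℝ}

theorem Lp_eq_mul_integral (hε : 0 ≤ ε) (a : ℝ) :
    Lp ε a = (2 * √ε)⁻¹ * ∫ θ in (-a)..a, (√(sin a ^ 2 - sin θ ^ 2))⁻¹ := by
  have hsqrt : √(2 ^ 2 * ε) = 2 * √ε := by
    rw [sqrt_mul (by positivity), sqrt_sq zero_le_two]
  rw [Lp, ← intervalIntegral.integral_const_mul]
  congr with θ
  rw [cos_two_mul_sub_cos_two_mul, ← mul_inv, ← hsqrt, ← sqrt_mul (by positivity), one_div]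
  congr 2
  ring

theorem arsinh_tan_div_sqrt_le_Lp (hε : 0 ≤ ε) {a : ℝ} (ha₀ : 0 ≤ a) (ha : a < π / 2) :
    arsinh (tan a) / √ε ≤ Lp ε a :=
  calc arsinh (tan a) / √ε = (2 * √ε)⁻¹ * (2 * arsinh (tan a)) := by
        rw [mul_inv]
        ring
    _ ≤ (2 * √ε)⁻¹ * ∫ θ in (-a)..a, (√(sin a ^ 2 - sin θ ^ 2))⁻¹ := by
        gcongr
        exact two_mul_arsinh_tan_le_integral ha₀ ha
    _ = Lp ε a := (Lp_eq_mul_integral hε a).symm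

end LadderLength

/-- `L_p(θ₀) → +∞` as `θ₀ → (π/2)⁻`. -/
theorem stmt_6 (ε : ℝ) (hε : 0 < ε) :
    Tendsto (fun θ₀ => Lp ε θ₀)
      (nhdsWithin (Real.pi / 2) (Set.Ioo 0 (Real.pi / 2))) atTop := by
  have hlower : ∀ᶠ θ₀ in nhdsWithin (Real.pi / 2) (Set.Ioo 0 (Real.pi / 2)),
      Real.arsinh (Real.tan θ₀) / Real.sqrt ε ≤ Lp ε θ₀ := by
    filter_upwards [self_mem_nhdsWithin] with θ₀ hθ₀
    exact arsinh_tan_div_sqrt_le_Lp hε.le hθ₀.1.le hθ₀.2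
  have hdiverges : Tendsto (fun θ₀ => Real.arsinh (Real.tan θ₀) / Real.sqrt ε)
      (nhdsWithin (Real.pi / 2) (Set.Ioo 0 (Real.pi / 2))) atTop :=
    (tendsto_arsinh_tan_pi_div_two.mono_left
      (nhdsWithin_mono _ Set.Ioo_subset_Iio_self)).atTop_div_const (Real.sqrt_pos.2 hε)
  exact tendsto_atTop_mono' _ hlower hdiverges
end

section
/- Let ε > 0 and let L > π/(2√ε). Then there exist θ₀ ∈ (0, π/2) and a twice continuously differentiable function θ : [0,L] → ℝ satisfying θ''(R) + 2ε·sin(2θ(R)) = 0 for all R ∈ [0,L], the boundary conditions θ'(0) = θ'(L) = 0, the symmetry θ(L − R) = −θ(R) for all R ∈ [0,L], with θ(0) = −θ₀, θ(L) = θ₀, and θ'(R) > 0 for all R ∈ (0,L). (That is, every ladder of length exceeding the critical length L₀ = π/(2√ε) admits a single-perversion equilibrium.) -/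
/-!
The equation `θ'' + 2ε sin (2θ) = 0` is the pendulum equation for `2θ`, and an odd oscillation
around the stable equilibrium is `sin θ = k sn u` with modulus `0 < k < 1` and rescaled time
`u = 2√ε (R - L/2)`. Half a period of this oscillation takes time `2 K(k)`, where `K` is the
complete elliptic integral of the first kind, so for a monotone solution the Neumann conditions
amount to `K(k) = √ε L`. As `K` is continuous on `[0, 1)`, equals `π/2` at `0` and tends to infinity
at `1`, this can be solved for `k` as soon as `√ε L > π/2`. The amplitude is `θ₀ = arcsin k`.
-/

open Set Filter Topology Real

section Deriv

lemma surjective_of_pos_of_le_deriv {f : ℝ → ℝ} {c : ℝ} (hf : Differentiable ℝ f) (hc : 0 < c)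
    (hderiv : ∀ x, c ≤ deriv f x) : Function.Surjective f := by
  intro y
  set x := |y - f 0| / c
  have mul_x : c * x = |y - f 0| := mul_div_cancel₀ _ hc.ne'
  have x_nonneg : 0 ≤ x := by positivity
  have upper := mul_sub_le_image_sub_of_le_deriv hf hderiv x_nonneg
  have lower := mul_sub_le_image_sub_of_le_deriv hf hderiv (neg_nonpos.2 x_nonneg)
  rw [sub_zero, mul_x] at upper
  rw [zero_sub, neg_neg, mul_x] at lower
  exact mem_range_of_exists_le_of_exists_ge hf.continuous
    ⟨-x, by linarith [neg_abs_le (y - f 0)]⟩ ⟨x, by linarith [le_abs_self (y - f 0)]⟩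

lemma deriv_comp_mul_sub {𝕜 E : Type*} [NontriviallyNormedField 𝕜] [NormedAddCommGroup E]
    [NormedSpace 𝕜 E] (f : 𝕜 → E) (c a : 𝕜) :
    deriv (fun x ↦ f (c * (x - a))) = fun x ↦ c • deriv f (c * (x - a)) := by
  ext x
  rw [deriv_comp_sub_const (fun y ↦ f (c * y)), deriv_comp_mul_left]

end Deriv

section EllipticIntegral

/-- Legendre's `Δ(t) = √(1 - k² sin² t)` for the modulus `k`. -/
noncomputable def legendreDelta (k t : ℝ) : ℝ := √(1 - k ^ 2 * sin t ^ 2)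

/-- The incomplete elliptic integral of the first kind `F(x, k)`, as a function of the modulus `k`
(rather than the parameter `k²`) and the amplitude `x`. -/
noncomputable def ellipticF (k x : ℝ) : ℝ := ∫ t in 0..x, (legendreDelta k t)⁻¹

/-- The complete elliptic integral of the first kind `K(k)`, as a function of the modulus. -/
noncomputable def ellipticK (k : ℝ) : ℝ := ellipticF k (π / 2)

variable {k : ℝ}

lemma mul_sin_mem_Ioo (hk : |k| < 1) (t : ℝ) : k * sin t ∈ Ioo (-1) 1 := by
  rw [mem_Ioo, ← abs_lt, abs_mul]
  exact mul_lt_one_of_nonneg_of_lt_one_left (abs_nonneg k) hk (abs_sin_le_one t)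

lemma legendreDelta_pos (hk : |k| < 1) (t : ℝ) : 0 < legendreDelta k t := by
  have h := (sq_lt_one_iff_abs_lt_one _).2 (abs_lt.2 (mul_sin_mem_Ioo hk t))
  exact sqrt_pos.2 (by rwa [← mul_pow, sub_pos])

lemma legendreDelta_le_one (k t : ℝ) : legendreDelta k t ≤ 1 :=
  sqrt_le_one.2 <| sub_le_self 1 (by positivity)

lemma legendreDelta_neg (k t : ℝ) : legendreDelta k (-t) = legendreDelta k t := by
  simp [legendreDelta]

lemma continuous_legendreDelta (k : ℝ) : Continuous (legendreDelta k) := by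
  unfold legendreDelta
  fun_prop

lemma continuous_inv_legendreDelta (hk : |k| < 1) : Continuous fun t ↦ (legendreDelta k t)⁻¹ :=
  (continuous_legendreDelta k).inv₀ fun t ↦ (legendreDelta_pos hk t).ne'

lemma ellipticF_neg (k x : ℝ) : ellipticF k (-x) = -ellipticF k x := by
  have h := intervalIntegral.integral_comp_neg (a := 0) (b := x) fun t ↦ (legendreDelta k t)⁻¹
  simp only [legendreDelta_neg, neg_zero] at h
  rw [ellipticF, ellipticF, h, intervalIntegral.integral_symm]

lemma hasDerivAt_ellipticF (hk : |k| < 1) (x : ℝ) :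
    HasDerivAt (ellipticF k) (legendreDelta k x)⁻¹ x :=
  (continuous_inv_legendreDelta hk).integral_hasStrictDerivAt 0 x |>.hasDerivAt

lemma strictMono_ellipticF (hk : |k| < 1) : StrictMono (ellipticF k) :=
  strictMono_of_hasDerivAt_pos (hasDerivAt_ellipticF hk)
    fun x ↦ inv_pos.2 (legendreDelta_pos hk x)

lemma surjective_ellipticF (hk : |k| < 1) : Function.Surjective (ellipticF k) := by
  refine surjective_of_pos_of_le_deriv (fun x ↦ (hasDerivAt_ellipticF hk x).differentiableAt)
    one_pos fun x ↦ ?_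
  rw [(hasDerivAt_ellipticF hk x).deriv]
  exact (one_le_inv₀ (legendreDelta_pos hk x)).2 (legendreDelta_le_one k x)

@[simp]
lemma ellipticK_zero : ellipticK 0 = π / 2 := by
  simp [ellipticK, ellipticF, legendreDelta]

lemma continuousOn_ellipticK : ContinuousOn ellipticK {k | |k| < 1} := by
  rw [continuousOn_iff_continuous_domRestrict]
  refine intervalIntegral.continuous_parametric_intervalIntegral_of_continuous'
    (f := fun (k : {k : ℝ | |k| < 1}) t ↦ (legendreDelta k t)⁻¹) ?_ 0 (π / 2)
  refine Continuous.inv₀ ?_ fun p ↦ (legendreDelta_pos p.1.2 p.2).ne'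
  unfold legendreDelta
  fun_prop

lemma sqrt_one_sub_sq_pos (hk : |k| < 1) : 0 < √(1 - k ^ 2) :=
  sqrt_pos.2 <| sub_pos.2 <| (sq_lt_one_iff_abs_lt_one k).2 hk

lemma legendreDelta_pi_div_two_sub_le (hk : |k| ≤ 1) {s : ℝ} (hs : 0 ≤ s) :
    legendreDelta k (π / 2 - s) ≤ √(1 - k ^ 2) + s := by
  have complementary_nonneg : 0 ≤ 1 - k ^ 2 := sub_nonneg.2 <| (sq_le_one_iff_abs_le_one k).2 hk
  refine sqrt_le_iff.2 ⟨by positivity, ?_⟩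
  rw [sin_pi_div_two_sub]
  calc 1 - k ^ 2 * cos s ^ 2
      = (1 - k ^ 2) * cos s ^ 2 + sin s ^ 2 := by linear_combination -sin_sq_add_cos_sq s
    _ ≤ (1 - k ^ 2) * 1 + s ^ 2 := by
      gcongr ?_ + ?_
      exacts [mul_le_mul_of_nonneg_left (cos_sq_le_one s) complementary_nonneg, sin_sq_le_sq]
    _ = √(1 - k ^ 2) ^ 2 + s ^ 2 := by rw [sq_sqrt complementary_nonneg, mul_one]
    _ ≤ (√(1 - k ^ 2) + s) ^ 2 := by nlinarith [mul_nonneg (sqrt_nonneg (1 - k ^ 2)) hs]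

lemma ellipticK_eq_integral_pi_div_two_sub (k : ℝ) :
    ellipticK k = ∫ s in 0..π / 2, (legendreDelta k (π / 2 - s))⁻¹ := by
  rw [intervalIntegral.integral_comp_sub_left (fun t ↦ (legendreDelta k t)⁻¹), sub_self, sub_zero,
    ellipticK, ellipticF]

lemma log_le_ellipticK (hk : |k| < 1) :
    log ((√(1 - k ^ 2) + π / 2) / √(1 - k ^ 2)) ≤ ellipticK k := by
  have complementary_pos : 0 < √(1 - k ^ 2) := sqrt_one_sub_sq_pos hk
  calc log ((√(1 - k ^ 2) + π / 2) / √(1 - k ^ 2))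
      = ∫ s in 0..π / 2, (√(1 - k ^ 2) + s)⁻¹ := by
        rw [intervalIntegral.integral_comp_add_left (fun s ↦ s⁻¹), add_zero,
          integral_inv_of_pos complementary_pos (by positivity)]
    _ ≤ ∫ s in 0..π / 2, (legendreDelta k (π / 2 - s))⁻¹ := by
        refine intervalIntegral.integral_mono_on (by positivity) ?_ ?_ fun s hs ↦ ?_
        · refine ContinuousOn.intervalIntegrable <| ContinuousOn.inv₀ (by fun_prop) fun s hs ↦ ?_
          rw [uIcc_of_le (by positivity)] at hs
          exact (add_pos_of_pos_of_nonneg complementary_pos hs.1).ne'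
        · exact ((continuous_inv_legendreDelta hk).comp (by fun_prop)).intervalIntegrable _ _
        · exact inv_anti₀ (legendreDelta_pos hk _) (legendreDelta_pi_div_two_sub_le hk.le hs.1)
    _ = ellipticK k := (ellipticK_eq_integral_pi_div_two_sub k).symm

lemma tendsto_ellipticK_atTop : Tendsto ellipticK (𝓝[<] 1) atTop := by
  have abs_lt_one : ∀ᶠ k : ℝ in 𝓝[<] 1, |k| < 1 := by
    filter_upwards [Ioo_mem_nhdsLT (show (-1 : ℝ) < 1 by norm_num)] with k hk using abs_lt.2 hk
  have complementary_tendsto : Tendsto (fun k : ℝ ↦ √(1 - k ^ 2)) (𝓝[<] 1) (𝓝[>] 0) := by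
    refine tendsto_nhdsWithin_iff.2 ⟨?_, ?_⟩
    · have : Continuous fun k : ℝ ↦ √(1 - k ^ 2) := by fun_prop
      simpa using (this.tendsto 1).mono_left nhdsWithin_le_nhds
    · exact abs_lt_one.mono fun k ↦ sqrt_one_sub_sq_pos
  have quotient_tendsto : Tendsto (fun x : ℝ ↦ (x + π / 2) / x) (𝓝[>] 0) atTop := by
    have : Tendsto (fun x : ℝ ↦ x + π / 2) (𝓝[>] 0) (𝓝 (0 + π / 2)) :=
      (tendsto_id.mono_left nhdsWithin_le_nhds).add_const _
    exact this.pos_mul_atTop (by positivity) tendsto_inv_nhdsGT_zero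
  exact tendsto_atTop_mono' _ (abs_lt_one.mono fun k ↦ log_le_ellipticK)
    (tendsto_log_atTop.comp (quotient_tendsto.comp complementary_tendsto))

lemma Ioi_pi_div_two_subset_image_ellipticK : Ioi (π / 2) ⊆ ellipticK '' Ioo 0 1 := by
  intro M hM
  have abs_lt_one : Ico (0 : ℝ) 1 ⊆ {k | |k| < 1} := fun k hk ↦
    (abs_of_nonneg hk.1).trans_lt hk.2
  obtain ⟨k, hk, rfl⟩ : M ∈ ellipticK '' Ico 0 1 :=
    isPreconnected_Ico.intermediate_value_Ici (left_mem_Ico.2 one_pos)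
      (le_principal_iff.2 (Ico_mem_nhdsLT one_pos))
      (continuousOn_ellipticK.mono abs_lt_one) tendsto_ellipticK_atTop
      (mem_Ici.2 (by simpa using (mem_Ioi.1 hM).le))
  have k_ne_zero : k ≠ 0 := by
    rintro rfl
    simp at hM
  exact mem_image_of_mem _ ⟨hk.1.lt_of_ne' k_ne_zero, hk.2⟩

end EllipticIntegral

section JacobiAmplitude

/-- The Jacobi amplitude `am(u, k)`, the inverse of the bijection `ellipticF k`. It is meaningful
only for `|k| < 1`; `Function.invFun` makes it total. -/
noncomputable def jacobiAm (k : ℝ) : ℝ → ℝ := Function.invFun (ellipticF k)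

variable {k : ℝ}

lemma ellipticF_jacobiAm (hk : |k| < 1) (u : ℝ) : ellipticF k (jacobiAm k u) = u :=
  Function.rightInverse_invFun (surjective_ellipticF hk) u

lemma jacobiAm_ellipticF (hk : |k| < 1) (x : ℝ) : jacobiAm k (ellipticF k x) = x :=
  Function.leftInverse_invFun (strictMono_ellipticF hk).injective x

lemma jacobiAm_ellipticK (hk : |k| < 1) : jacobiAm k (ellipticK k) = π / 2 :=
  jacobiAm_ellipticF hk _

lemma jacobiAm_neg (hk : |k| < 1) (u : ℝ) : jacobiAm k (-u) = -jacobiAm k u := by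
  apply (strictMono_ellipticF hk).injective
  rw [ellipticF_neg, ellipticF_jacobiAm hk, ellipticF_jacobiAm hk]

lemma strictMono_jacobiAm (hk : |k| < 1) : StrictMono (jacobiAm k) := fun u v huv ↦ by
  rwa [← (strictMono_ellipticF hk).lt_iff_lt, ellipticF_jacobiAm hk, ellipticF_jacobiAm hk]

lemma continuous_jacobiAm (hk : |k| < 1) : Continuous (jacobiAm k) :=
  (strictMono_jacobiAm hk).monotone.continuous_of_surjective
    fun x ↦ ⟨ellipticF k x, jacobiAm_ellipticF hk x⟩

lemma hasDerivAt_jacobiAm (hk : |k| < 1) (u : ℝ) :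
    HasDerivAt (jacobiAm k) (legendreDelta k (jacobiAm k u)) u := by
  simpa only [inv_inv] using HasDerivAt.of_local_left_inverse
    (continuous_jacobiAm hk).continuousAt (hasDerivAt_ellipticF hk (jacobiAm k u))
    (inv_pos.2 (legendreDelta_pos hk _)).ne' (.of_forall (ellipticF_jacobiAm hk))

lemma contDiff_one_jacobiAm (hk : |k| < 1) : ContDiff ℝ 1 (jacobiAm k) := by
  refine contDiff_one_iff_deriv.2 ⟨fun u ↦ (hasDerivAt_jacobiAm hk u).differentiableAt, ?_⟩
  rw [funext fun u ↦ (hasDerivAt_jacobiAm hk u).deriv]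
  exact (continuous_legendreDelta k).comp (continuous_jacobiAm hk)

end JacobiAmplitude

section Pendulum

/-- Half the deflection, at time `u` after passing the lowest point, of a pendulum `x'' + sin x = 0`
that swings between `-2 arcsin k` and `2 arcsin k`. -/
noncomputable def pendulumHalfAngle (k u : ℝ) : ℝ := arcsin (k * sin (jacobiAm k u))

variable {k : ℝ}

lemma sin_pendulumHalfAngle (hk : |k| < 1) (u : ℝ) :
    sin (pendulumHalfAngle k u) = k * sin (jacobiAm k u) :=
  sin_arcsin (mul_sin_mem_Ioo hk _).1.le (mul_sin_mem_Ioo hk _).2.le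

lemma cos_pendulumHalfAngle (k u : ℝ) :
    cos (pendulumHalfAngle k u) = legendreDelta k (jacobiAm k u) := by
  rw [pendulumHalfAngle, cos_arcsin, mul_pow, legendreDelta]

lemma pendulumHalfAngle_neg (hk : |k| < 1) (u : ℝ) :
    pendulumHalfAngle k (-u) = -pendulumHalfAngle k u := by
  simp only [pendulumHalfAngle, jacobiAm_neg hk, sin_neg, mul_neg, arcsin_neg]

lemma pendulumHalfAngle_ellipticK (hk : |k| < 1) :
    pendulumHalfAngle k (ellipticK k) = arcsin k := by
  rw [pendulumHalfAngle, jacobiAm_ellipticK hk, sin_pi_div_two, mul_one]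

lemma hasDerivAt_pendulumHalfAngle (hk : |k| < 1) (u : ℝ) :
    HasDerivAt (pendulumHalfAngle k) (k * cos (jacobiAm k u)) u := by
  have mem := mul_sin_mem_Ioo hk (jacobiAm k u)
  refine ((hasDerivAt_arcsin mem.1.ne' mem.2.ne).comp u
    ((hasDerivAt_jacobiAm hk u).sin.const_mul k)).congr_deriv ?_
  rw [mul_pow, ← legendreDelta]
  field [(legendreDelta_pos hk (jacobiAm k u)).ne']

lemma deriv_pendulumHalfAngle (hk : |k| < 1) :
    deriv (pendulumHalfAngle k) = fun u ↦ k * cos (jacobiAm k u) :=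
  funext fun u ↦ (hasDerivAt_pendulumHalfAngle hk u).deriv

lemma deriv_deriv_pendulumHalfAngle (hk : |k| < 1) (u : ℝ) :
    deriv (deriv (pendulumHalfAngle k)) u = -sin (2 * pendulumHalfAngle k u) / 2 := by
  rw [deriv_pendulumHalfAngle hk, ((hasDerivAt_jacobiAm hk u).cos.const_mul k).deriv, sin_two_mul,
    sin_pendulumHalfAngle hk, cos_pendulumHalfAngle]
  ring

lemma contDiff_two_pendulumHalfAngle (hk : |k| < 1) : ContDiff ℝ 2 (pendulumHalfAngle k) := by
  rw [← one_add_one_eq_two, contDiff_succ_iff_deriv]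
  refine ⟨fun u ↦ (hasDerivAt_pendulumHalfAngle hk u).differentiableAt, by simp, ?_⟩
  rw [deriv_pendulumHalfAngle hk]
  exact contDiff_const.mul (contDiff_one_jacobiAm hk).cos

lemma deriv_pendulumHalfAngle_ellipticK (hk : |k| < 1) :
    deriv (pendulumHalfAngle k) (ellipticK k) = 0 := by
  simp [deriv_pendulumHalfAngle hk, jacobiAm_ellipticK hk]

lemma deriv_pendulumHalfAngle_neg (hk : |k| < 1) (u : ℝ) :
    deriv (pendulumHalfAngle k) (-u) = deriv (pendulumHalfAngle k) u := by
  simp only [deriv_pendulumHalfAngle hk, jacobiAm_neg hk, cos_neg]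

lemma deriv_pendulumHalfAngle_pos (hk : k ∈ Ioo 0 1) {u : ℝ}
    (hu : u ∈ Ioo (-ellipticK k) (ellipticK k)) : 0 < deriv (pendulumHalfAngle k) u := by
  have hk' : |k| < 1 := (abs_of_pos hk.1).trans_lt hk.2
  have lower := strictMono_jacobiAm hk' hu.1
  have upper := strictMono_jacobiAm hk' hu.2
  rw [jacobiAm_neg hk', jacobiAm_ellipticK hk'] at lower
  rw [jacobiAm_ellipticK hk'] at upper
  rw [deriv_pendulumHalfAngle hk']
  exact mul_pos hk.1 (cos_pos_of_mem_Ioo ⟨lower, upper⟩)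

end Pendulum

/-- Every ladder of length exceeding the critical length `L₀ = π/(2√ε)` admits a
single-perversion equilibrium. -/
theorem stmt_8 (ε L : ℝ) (hε : 0 < ε) (hL : Real.pi / (2 * Real.sqrt ε) < L) :
    ∃ θ₀ ∈ Set.Ioo 0 (Real.pi / 2), ∃ θ : ℝ → ℝ, ContDiff ℝ 2 θ ∧
      (∀ R ∈ Set.Icc 0 L, deriv (deriv θ) R + 2 * ε * Real.sin (2 * θ R) = 0) ∧
      deriv θ 0 = 0 ∧ deriv θ L = 0 ∧
      (∀ R ∈ Set.Icc 0 L, θ (L - R) = -θ R) ∧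
      θ 0 = -θ₀ ∧ θ L = θ₀ ∧
      (∀ R ∈ Set.Ioo 0 L, 0 < deriv θ R) := by
  have quarter_period_gt : π / 2 < √ε * L := by
    rw [div_lt_iff₀ (by positivity)] at hL
    linarith
  obtain ⟨k, hk, hK⟩ := Ioi_pi_div_two_subset_image_ellipticK quarter_period_gt
  have hk' : |k| < 1 := (abs_of_pos hk.1).trans_lt hk.2
  obtain ⟨c, c_pos, hc⟩ : ∃ c, 0 < c ∧ c = 2 * √ε := ⟨_, by positivity, rfl⟩
  have at_zero : c * (0 - L / 2) = -ellipticK k := by rw [hK, hc]; ring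
  have at_L : c * (L - L / 2) = ellipticK k := by rw [hK, hc]; ring
  refine ⟨arcsin k, ⟨arcsin_pos.2 hk.1, arcsin_lt_pi_div_two.2 hk.2⟩,
    fun R ↦ pendulumHalfAngle k (c * (R - L / 2)),
    (contDiff_two_pendulumHalfAngle hk').comp (by fun_prop), ?_⟩
  simp only [deriv_comp_mul_sub, smul_eq_mul, deriv_const_mul_field, at_zero, at_L]
  refine ⟨fun R _ ↦ ?_, ?_, ?_, fun R _ ↦ ?_, ?_, pendulumHalfAngle_ellipticK hk', fun R hR ↦ ?_⟩
  · rw [deriv_deriv_pendulumHalfAngle hk', hc]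
    linear_combination (-2 * sin (2 * pendulumHalfAngle k (2 * √ε * (R - L / 2)))) * sq_sqrt hε.le
  · rw [deriv_pendulumHalfAngle_neg hk', deriv_pendulumHalfAngle_ellipticK hk', mul_zero]
  · rw [deriv_pendulumHalfAngle_ellipticK hk', mul_zero]
  · rw [← pendulumHalfAngle_neg hk']
    ring_nf
  · rw [pendulumHalfAngle_neg hk', pendulumHalfAngle_ellipticK hk']
  · refine mul_pos c_pos (deriv_pendulumHalfAngle_pos hk ?_)
    rw [← at_zero, ← at_L]
    exact ⟨by gcongr; exact hR.1, by gcongr; exact hR.2⟩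
end

section
/- Let ε > 0 and let 0 < L < π/(2√ε). Then there is no twice continuously differentiable function θ : [0,L] → ℝ satisfying θ''(R) + 2ε·sin(2θ(R)) = 0 for all R ∈ [0,L], θ'(0) = θ'(L) = 0, θ(L − R) = −θ(R) for all R ∈ [0,L], and θ'(R) > 0 for all R ∈ (0,L). (That is, ladders shorter than the critical length L₀ = π/(2√ε) admit no perversion equilibrium.) -/
/-!
A solution odd about the midpoint satisfies `θ (L/2) = 0` and `θ' L = 0` on the right half
`[L/2, L]`. Put `k = 2√ε`, so that `2 ε t sin (2 t) < k² t²` for `t ≠ 0`. For `k L / 2 ≤ π / 2`,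
Picone's function `G = θ θ' - k θ² cot (k (x - L/2))` has derivative
`(θ' - k θ cot (k (x - L/2)))² + θ (θ'' + k² θ) ≥ 0`, while `G (L/2) = 0` and `G L ≤ 0`. Hence `G`
is constant, so `θ (θ'' + k² θ) = 0`, and this forces `θ = 0`.
-/

open Set Filter Topology

lemma hasDerivAt_cot {x : ℝ} (hx : Real.sin x ≠ 0) :
    HasDerivAt Real.cot (-(1 + Real.cot x ^ 2)) x := by
  have hquot : Real.cot = fun y ↦ Real.cos y / Real.sin y := funext Real.cot_eq_cos_div_sin
  rw [hquot]
  refine ((Real.hasDerivAt_cos x).fun_div (Real.hasDerivAt_sin x) hx).congr_deriv ?_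
  field_simp
  ring

lemma cot_nonneg {x : ℝ} (hx₀ : 0 ≤ x) (hx : x ≤ Real.pi / 2) : 0 ≤ Real.cot x := by
  rw [← inv_nonneg, Real.cot_inv_eq_tan]
  exact Real.tan_nonneg_of_nonneg_of_le_pi_div_two hx₀ hx

lemma cot_le_inv {x : ℝ} (hx₀ : 0 ≤ x) (hx : x ≤ Real.pi / 2) : Real.cot x ≤ x⁻¹ := by
  rcases hx₀.eq_or_lt with rfl | hpos
  · simp [Real.cot_eq_cos_div_sin]
  rcases hx.eq_or_lt with rfl | hlt
  · rw [Real.cot_eq_cos_div_sin, Real.cos_pi_div_two, zero_div]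
    positivity
  · rw [← inv_inv (Real.cot x), Real.cot_inv_eq_tan]
    exact inv_anti₀ hpos (Real.le_tan hx₀ hlt)

lemma mul_sin_lt_sq {x : ℝ} (hx : x ≠ 0) : x * Real.sin x < x ^ 2 :=
  calc x * Real.sin x ≤ |x| * |Real.sin x| := (le_abs_self _).trans_eq (abs_mul _ _)
    _ < |x| * |x| := mul_lt_mul_of_pos_left (Real.abs_sin_lt_abs hx) (abs_pos.2 hx)
    _ = x ^ 2 := by rw [abs_mul_abs_self, sq]

/-- Picone's function comparing `u`, with derivative `v`, to the solution `sin (k (x - a))` of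
`y'' + k² y = 0` vanishing at `a`. Since `Real.cot 0 = 0`, its value at `a` is `u a * v a`. -/
noncomputable def picone (k a : ℝ) (u v : ℝ → ℝ) (x : ℝ) : ℝ :=
  u x * v x - k * u x ^ 2 * Real.cot (k * (x - a))

section Picone

variable {k a b : ℝ} {u v w : ℝ → ℝ} {s : Set ℝ}

lemma picone_left (hua : u a = 0) : picone k a u v a = 0 := by
  simp [picone, hua]

lemma picone_nonpos {x : ℝ} (hk : 0 ≤ k) (hax : a ≤ x) (hkx : k * (x - a) ≤ Real.pi / 2)
    (huv : u x * v x ≤ 0) : picone k a u v x ≤ 0 := by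
  have hcot := cot_nonneg (mul_nonneg hk (sub_nonneg.2 hax)) hkx
  have hterm : 0 ≤ k * u x ^ 2 * Real.cot (k * (x - a)) := by positivity
  unfold picone
  linarith

lemma hasDerivWithinAt_picone {x v' : ℝ} (hu : HasDerivWithinAt u (v x) s x)
    (hv : HasDerivWithinAt v v' s x) (hx : Real.sin (k * (x - a)) ≠ 0) :
    HasDerivWithinAt (picone k a u v)
      ((v x - k * u x * Real.cot (k * (x - a))) ^ 2 + u x * (v' + k ^ 2 * u x)) s x := by
  have hlin : HasDerivAt (fun y ↦ k * (y - a)) k x := by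
    simpa using ((hasDerivAt_id x).sub_const a).const_mul k
  have hcot := ((hasDerivAt_cot hx).comp x hlin).hasDerivWithinAt (s := s)
  refine ((hu.fun_mul hv).fun_sub (((hu.fun_pow 2).const_mul k).fun_mul hcot)).congr_deriv ?_
  simp only [Function.comp_apply]
  ring

lemma tendsto_sq_div_sub_zero {u' : ℝ} (hu : HasDerivWithinAt u u' s a) (hua : u a = 0) :
    Tendsto (fun x ↦ u x ^ 2 / (x - a)) (𝓝[s \ {a}] a) (𝓝 0) := by
  have hslope := hasDerivWithinAt_iff_tendsto_slope.1 hu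
  have hzero : Tendsto u (𝓝[s \ {a}] a) (𝓝 0) :=
    hua ▸ hu.continuousWithinAt.mono_left (nhdsWithin_mono a sdiff_subset)
  refine (mul_zero u' ▸ hslope.mul hzero).congr fun x ↦ ?_
  rw [slope_def_field, hua]
  ring

-- At the singularity of `cot`, the term `k u² cot (k (x - a))` lies between `0` and `u² / (x - a)`.
lemma continuousWithinAt_picone_left {u' : ℝ} (hk : 0 < k) (hab : k * (b - a) ≤ Real.pi / 2)
    (hu : HasDerivWithinAt u u' (Icc a b) a) (hv : ContinuousWithinAt v (Icc a b) a)
    (hua : u a = 0) : ContinuousWithinAt (picone k a u v) (Icc a b) a := by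
  refine (hu.continuousWithinAt.mul hv).sub (continuousWithinAt_sdiff_self.1 ?_)
  have hmem : ∀ᶠ x in 𝓝[Icc a b \ {a}] a, 0 ≤ k * (x - a) ∧ k * (x - a) ≤ Real.pi / 2 := by
    filter_upwards [self_mem_nhdsWithin] with x ⟨⟨hax, hxb⟩, _⟩
    exact ⟨mul_nonneg hk.le (sub_nonneg.2 hax), le_trans (by gcongr) hab⟩
  have hlim : Tendsto (fun x ↦ k * u x ^ 2 * Real.cot (k * (x - a))) (𝓝[Icc a b \ {a}] a)
      (𝓝 0) := by
    refine squeeze_zero' ?_ ?_ (tendsto_sq_div_sub_zero hu hua)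
    · filter_upwards [hmem] with x ⟨h₀, h₁⟩
      exact mul_nonneg (by positivity) (cot_nonneg h₀ h₁)
    · filter_upwards [hmem] with x ⟨h₀, h₁⟩
      calc k * u x ^ 2 * Real.cot (k * (x - a))
          ≤ k * u x ^ 2 * (k * (x - a))⁻¹ := by gcongr; exact cot_le_inv h₀ h₁
        _ = u x ^ 2 / (x - a) := by field_simp
  simpa [ContinuousWithinAt, hua] using hlim

lemma sin_mul_sub_pos {x : ℝ} (hk : 0 < k) (hab : k * (b - a) ≤ Real.pi / 2)
    (hx : x ∈ Ioc a b) : 0 < Real.sin (k * (x - a)) := by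
  have hxb : k * (x - a) ≤ k * (b - a) := by gcongr; exact hx.2
  exact Real.sin_pos_of_pos_of_lt_pi (mul_pos hk (sub_pos.2 hx.1)) (by linarith [Real.pi_pos])

lemma continuousOn_picone (hk : 0 < k) (hab : k * (b - a) ≤ Real.pi / 2)
    (hu : ∀ x ∈ Icc a b, HasDerivWithinAt u (v x) (Icc a b) x)
    (hv : ∀ x ∈ Icc a b, HasDerivWithinAt v (w x) (Icc a b) x) (hua : u a = 0) :
    ContinuousOn (picone k a u v) (Icc a b) := by
  intro x hx
  rcases hx.1.eq_or_lt with rfl | hax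
  · exact continuousWithinAt_picone_left hk hab (hu _ hx) (hv _ hx).continuousWithinAt hua
  · exact (hasDerivWithinAt_picone (hu x hx) (hv x hx)
      (sin_mul_sub_pos hk hab ⟨hax, hx.2⟩).ne').continuousWithinAt

lemma monotoneOn_picone (hk : 0 < k) (hab : k * (b - a) ≤ Real.pi / 2)
    (hu : ∀ x ∈ Icc a b, HasDerivWithinAt u (v x) (Icc a b) x)
    (hv : ∀ x ∈ Icc a b, HasDerivWithinAt v (w x) (Icc a b) x) (hua : u a = 0)
    (hw : ∀ x ∈ Ioo a b, 0 ≤ u x * (w x + k ^ 2 * u x)) :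
    MonotoneOn (picone k a u v) (Icc a b) := by
  have hderiv : ∀ x ∈ interior (Icc a b), HasDerivWithinAt (picone k a u v)
      ((v x - k * u x * Real.cot (k * (x - a))) ^ 2 + u x * (w x + k ^ 2 * u x))
      (interior (Icc a b)) x := by
    intro x hx
    have hmem : x ∈ Icc a b := interior_subset hx
    rw [interior_Icc] at hx ⊢
    exact (hasDerivWithinAt_picone (hu x hmem) (hv x hmem)
      (sin_mul_sub_pos hk hab (Ioo_subset_Ioc_self hx)).ne').mono Ioo_subset_Icc_self
  refine monotoneOn_of_hasDerivWithinAt_nonneg (convex_Icc a b)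
    (continuousOn_picone hk hab hu hv hua) hderiv fun x hx ↦ ?_
  rw [interior_Icc] at hx
  exact add_nonneg (sq_nonneg _) (hw x hx)

lemma eqOn_picone_zero (hk : 0 < k) (hab : k * (b - a) ≤ Real.pi / 2)
    (hu : ∀ x ∈ Icc a b, HasDerivWithinAt u (v x) (Icc a b) x)
    (hv : ∀ x ∈ Icc a b, HasDerivWithinAt v (w x) (Icc a b) x) (hua : u a = 0)
    (huvb : u b * v b ≤ 0) (hw : ∀ x ∈ Ioo a b, 0 ≤ u x * (w x + k ^ 2 * u x)) :
    EqOn (picone k a u v) 0 (Icc a b) := by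
  intro x hx
  have hle : a ≤ b := hx.1.trans hx.2
  have hmono := monotoneOn_picone hk hab hu hv hua hw
  apply le_antisymm
  · exact (hmono hx (right_mem_Icc.2 hle) hx.2).trans (picone_nonpos hk.le hle hab huvb)
  · exact (picone_left hua).ge.trans (hmono (left_mem_Icc.2 hle) hx hx.1)

theorem mul_deriv_add_sq_mul_eq_zero (hk : 0 < k) (hab : k * (b - a) ≤ Real.pi / 2)
    (hu : ∀ x ∈ Icc a b, HasDerivWithinAt u (v x) (Icc a b) x)
    (hv : ∀ x ∈ Icc a b, HasDerivWithinAt v (w x) (Icc a b) x) (hua : u a = 0)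
    (huvb : u b * v b ≤ 0) (hw : ∀ x ∈ Ioc a b, 0 ≤ u x * (w x + k ^ 2 * u x)) :
    ∀ x ∈ Ioc a b, u x * (w x + k ^ 2 * u x) = 0 := by
  intro x hx
  have hmem := Ioc_subset_Icc_self hx
  have hderiv := hasDerivWithinAt_picone (hu x hmem) (hv x hmem) (sin_mul_sub_pos hk hab hx).ne'
  have hconst : HasDerivWithinAt (picone k a u v) 0 (Icc a b) x :=
    (hasDerivWithinAt_const x _ (0 : ℝ)).congr_of_mem
      (eqOn_picone_zero hk hab hu hv hua huvb fun y hy ↦ hw y (Ioo_subset_Ioc_self hy)) hmem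
  have hsum := (uniqueDiffOn_Icc (hx.1.trans_le hx.2) x hmem).eq_deriv _ hderiv hconst
  exact ((add_eq_zero_iff_of_nonneg (sq_nonneg _) (hw x hx)).1 hsum).2

theorem eqOn_zero_of_mul_lt_sq {f : ℝ → ℝ} (hk : 0 < k) (hab : k * (b - a) ≤ Real.pi / 2)
    (hu : ∀ x ∈ Icc a b, HasDerivWithinAt u (v x) (Icc a b) x)
    (hv : ∀ x ∈ Icc a b, HasDerivWithinAt v (-f (u x)) (Icc a b) x) (hua : u a = 0)
    (huvb : u b * v b ≤ 0) (hf : ∀ t ≠ 0, t * f t < k ^ 2 * t ^ 2) : EqOn u 0 (Icc a b) := by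
  have hgap : ∀ t, t * (-f t + k ^ 2 * t) = k ^ 2 * t ^ 2 - t * f t := fun t ↦ by ring
  have hgap_nonneg : ∀ t, 0 ≤ t * (-f t + k ^ 2 * t) := by
    intro t
    rcases eq_or_ne t 0 with rfl | ht
    · simp
    · exact hgap t ▸ (sub_pos.2 (hf t ht)).le
  intro x hx
  rcases hx.1.eq_or_lt with rfl | hax
  · exact hua
  · have hzero := mul_deriv_add_sq_mul_eq_zero hk hab hu hv hua huvb (fun y _ ↦ hgap_nonneg (u y)) x
      ⟨hax, hx.2⟩
    by_contra hne
    exact (sub_pos.2 (hf _ hne)).ne' (hgap _ ▸ hzero)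

end Picone

theorem eqOn_zero_of_eqOn_zero_right_half {L : ℝ} {θ : ℝ → ℝ}
    (hodd : ∀ R ∈ Icc 0 L, θ (L - R) = -θ R) (hθ : EqOn θ 0 (Icc (L / 2) L)) :
    EqOn θ 0 (Icc 0 L) := by
  intro R hR
  rcases le_total (L / 2) R with hle | hle
  · exact hθ ⟨hle, hR.2⟩
  · have hrefl : θ (L - R) = 0 := hθ ⟨by linarith, by linarith [hR.1]⟩
    simpa [hodd R hR] using hrefl

theorem stmt_9_general {ε L : ℝ} (hε : 0 < ε) (hL : L ≤ Real.pi / (2 * Real.sqrt ε))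
    {θ θ' : ℝ → ℝ} (hθ : ∀ R ∈ Icc 0 L, HasDerivWithinAt θ (θ' R) (Icc 0 L) R)
    (hθ' : ∀ R ∈ Icc 0 L,
      HasDerivWithinAt θ' (-(2 * ε * Real.sin (2 * θ R))) (Icc 0 L) R)
    (hend : θ' L = 0) (hodd : ∀ R ∈ Icc 0 L, θ (L - R) = -θ R) : EqOn θ 0 (Icc 0 L) := by
  rcases lt_or_ge L 0 with hneg | hL₀
  · simp [Icc_eq_empty_of_lt hneg]
  have hsub : Icc (L / 2) L ⊆ Icc 0 L := Icc_subset_Icc_left (by linarith)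
  have hmid : θ (L / 2) = 0 := by
    have := hodd (L / 2) (hsub ⟨le_rfl, by linarith⟩)
    rw [sub_half] at this
    linarith
  have hlen : 2 * Real.sqrt ε * (L - L / 2) ≤ Real.pi / 2 := by
    rw [le_div_iff₀ (by positivity)] at hL
    linarith
  have hforce : ∀ t ≠ 0, t * (2 * ε * Real.sin (2 * t)) < (2 * Real.sqrt ε) ^ 2 * t ^ 2 := by
    intro t ht
    calc t * (2 * ε * Real.sin (2 * t))
        = ε * (2 * t * Real.sin (2 * t)) := by ring
      _ < ε * (2 * t) ^ 2 := by gcongr; exact mul_sin_lt_sq (mul_ne_zero two_ne_zero ht)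
      _ = (2 * Real.sqrt ε) ^ 2 * t ^ 2 := by rw [mul_pow 2 (Real.sqrt ε), Real.sq_sqrt hε.le]; ring
  exact eqOn_zero_of_eqOn_zero_right_half hodd <|
    eqOn_zero_of_mul_lt_sq (f := fun t ↦ 2 * ε * Real.sin (2 * t)) (by positivity) hlen
      (fun R hR ↦ (hθ R (hsub hR)).mono hsub) (fun R hR ↦ (hθ' R (hsub hR)).mono hsub) hmid
      (by simp [hend]) hforce

/-- Ladders shorter than the critical length `L₀ = π/(2√ε)` admit no
single-perversion equilibrium. -/
theorem stmt_9 (ε L : ℝ) (hε : 0 < ε) (hL0 : 0 < L)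
    (hL : L < Real.pi / (2 * Real.sqrt ε)) :
    ¬ ∃ θ : ℝ → ℝ, ContDiff ℝ 2 θ ∧
      (∀ R ∈ Set.Icc 0 L, deriv (deriv θ) R + 2 * ε * Real.sin (2 * θ R) = 0) ∧
      deriv θ 0 = 0 ∧ deriv θ L = 0 ∧
      (∀ R ∈ Set.Icc 0 L, θ (L - R) = -θ R) ∧
      (∀ R ∈ Set.Ioo 0 L, 0 < deriv θ R) := by
  rintro ⟨θ, hC, hode, -, hend, hodd, hpos⟩
  have hzero : EqOn θ 0 (Icc 0 L) := stmt_9_general hε hL.le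
    (fun R _ ↦ (hC.differentiable two_ne_zero R).hasDerivAt.hasDerivWithinAt)
    (fun R hR ↦ eq_neg_of_add_eq_zero_left (hode R hR) ▸
      (hC.differentiable_deriv_two R).hasDerivAt.hasDerivWithinAt) hend hodd
  have hmid : L / 2 ∈ Ioo 0 L := ⟨by linarith, by linarith⟩
  have hderiv : deriv θ (L / 2) = 0 := by
    simpa using (hzero.eventuallyEq_of_mem (Icc_mem_nhds hmid.1 hmid.2)).deriv_eq
  exact (hpos _ hmid).ne' hderiv
end

section
/- Let ε > 0, L > 0, and define E[θ] = ∫_0^L ( θ'(R)²/2 + ε·cos(2θ(R)) ) dR on continuously differentiable functions θ : [0,L] → ℝ. Let θ : [0,L] → ℝ be twice continuously differentiable, nonconstant, satisfy θ''(R) + 2ε·sin(2θ(R)) = 0 for all R ∈ [0,L], θ'(0) = θ'(L) = 0, and −π/2 < θ(R) < π/2 for all R ∈ [0,L]. Then θ is not a local minimum of E: for every δ > 0 there exists a continuously differentiable φ : [0,L] → ℝ with sup_{R ∈ [0,L]} (|φ(R)| + |φ'(R)|) < δ and E[θ + φ] < E[θ]. (All perversion and multiple-perversion equilibria of the ladder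 with Û₀ = 0 are unstable.) -/
/-!
For a potential `W`, the equilibria of `∫ (θ'² / 2 + W(θ))` solve `θ'' = W'(θ)`. Let `Q` be the
second variation at a nonconstant Neumann equilibrium on `[a, b]`. Differentiating the equation,
`θ'` solves the linearised equation, so integrating by parts gives
`Q(θ', ζ) = W'(θ(b)) ζ(b) - W'(θ(a)) ζ(a)` for every `ζ`. Since `θ'` vanishes at the endpoints,
`Q(θ', θ') = 0`; but `θ'` is not in the kernel of `Q`, because `W'(θ(a)) = 0` together with
`θ'(a) = 0` would make `θ` constant by uniqueness for the initial value problem. A null vector of a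
quadratic form outside its kernel can be perturbed, here by `ζ(R) = b - R`, to a direction of
negative second variation, along which the energy decreases.
-/

open Filter Set Topology

section Calculus

variable {E : Type*} [NormedAddCommGroup E] [NormedSpace ℝ E]

theorem eventually_lt_of_deriv_deriv_neg {f : ℝ → ℝ} {x₀ : ℝ} (hf : deriv (deriv f) x₀ < 0)
    (hd : deriv f x₀ = 0) (hc : ContinuousAt f x₀) : ∀ᶠ x in 𝓝[>] x₀, f x < f x₀ := by
  have hneg : ∀ᶠ x in 𝓝[>] x₀, deriv f x < 0 :=
    deriv_neg_right_of_sign_deriv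
      (nhdsWithin_le_nhds (eventually_nhdsWithin_sign_eq_of_deriv_neg hf hd))
  obtain ⟨c, hc₀, hneg⟩ := mem_nhdsGT_iff_exists_Ioo_subset.1 hneg
  filter_upwards [Ioo_mem_nhdsGT hc₀] with x hx
  have hcont : ContinuousOn f (Icc x₀ x) := by
    intro y hy
    rcases hy.1.eq_or_lt with rfl | hlt
    · exact hc.continuousWithinAt
    · exact (differentiableAt_of_deriv_ne_zero
        (hneg ⟨hlt, hy.2.trans_lt hx.2⟩).ne).continuousAt.continuousWithinAt
  have hanti : StrictAntiOn f (Icc x₀ x) := strictAntiOn_of_deriv_neg (convex_Icc x₀ x) hcont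
    fun y hy ↦ by
      rw [interior_Icc] at hy
      exact hneg ⟨hy.1, hy.2.trans hx.2⟩
  exact hanti (left_mem_Icc.2 hx.1.le) (right_mem_Icc.2 hx.1.le) hx.1

theorem hasDerivAt_intervalIntegral_of_continuous {F F' : ℝ → ℝ → E} (hF : ∀ t, Continuous (F t))
    (hF' : Continuous (Function.uncurry F')) (h : ∀ t x, HasDerivAt (F · x) (F' t x) t)
    (a b t₀ : ℝ) : HasDerivAt (fun t ↦ ∫ x in a..b, F t x) (∫ x in a..b, F' t₀ x) t₀ := by
  obtain ⟨C, hC⟩ := ((isCompact_Icc (a := t₀ - 1) (b := t₀ + 1)).prod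
    (isCompact_uIcc (a := a) (b := b))).exists_bound_of_continuousOn hF'.continuousOn
  exact (intervalIntegral.hasDerivAt_integral_of_dominated_loc_of_deriv_le
    (bound := fun _ ↦ C) (Icc_mem_nhds (by linarith) (by linarith))
    (.of_forall fun t ↦ (hF t).aestronglyMeasurable)
    ((hF t₀).intervalIntegrable a b)
    (hF'.comp (Continuous.prodMk_right t₀)).aestronglyMeasurable
    (.of_forall fun x hx t ht ↦ hC (t, x) ⟨ht, uIoc_subset_uIcc hx⟩)
    intervalIntegrable_const
    (.of_forall fun x _ t _ ↦ h t x)).2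

theorem hasDerivAt_const_add_mul_const (c d t : ℝ) : HasDerivAt (fun t ↦ c + t * d) d t :=
  (hasDerivAt_mul_const d).const_add c

theorem deriv_add_smul {f g : ℝ → E} (hf : Differentiable ℝ f) (hg : Differentiable ℝ g)
    (t x : ℝ) : deriv (f + t • g) x = deriv f x + t • deriv g x := by
  rw [deriv_add (hf x) ((hg x).const_smul t), deriv_const_smul t (hg x)]

theorem eventually_forall_norm_smul_add_norm_deriv_smul_lt {η : ℝ → E} (hη : ContDiff ℝ 1 η)
    {K : Set ℝ} (hK : IsCompact K) {δ : ℝ} (hδ : 0 < δ) :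
    ∀ᶠ t : ℝ in 𝓝 0, ∀ x ∈ K, ‖(t • η) x‖ + ‖deriv (t • η) x‖ < δ := by
  have hηc := hη.continuous
  have hderiv (t x : ℝ) : deriv (t • η) x = t • deriv η x :=
    deriv_const_smul t (hη.differentiable one_ne_zero x)
  simp only [hderiv, Pi.smul_apply]
  refine hK.eventually_forall_of_forall_eventually fun x _ ↦ ?_
  have hcont : Continuous fun p : ℝ × ℝ ↦ ‖p.1 • η p.2‖ + ‖p.1 • deriv η p.2‖ := by fun_prop
  exact hcont.continuousAt.eventually_lt continuousAt_const (by simpa using hδ)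

theorem eqOn_const_of_hasDerivAt_of_eq_zero {v : E → E} (hv : ContDiff ℝ 1 v) {f : ℝ → E}
    {a b : ℝ} (hf : ∀ t ∈ Icc a b, HasDerivAt f (v (f t)) t) (ha : v (f a) = 0) :
    EqOn f (fun _ ↦ f a) (Icc a b) := by
  rcases lt_or_ge b a with hba | hab
  · simp [Icc_eq_empty_of_lt hba]
  have hcont : ContinuousOn f (Icc a b) := HasDerivAt.continuousOn hf
  obtain ⟨K, hK⟩ := LocallyLipschitzOn.exists_lipschitzOnWith_of_compact
    (isCompact_Icc.image_of_continuousOn hcont) hv.locallyLipschitz.locallyLipschitzOn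
  refine ODE_solution_unique_of_mem_Icc_right (v := fun _ ↦ v) (fun _ _ ↦ hK) hcont
    (fun t ht ↦ (hf t (Ico_subset_Icc_self ht)).hasDerivWithinAt)
    (fun t ht ↦ mem_image_of_mem f (Ico_subset_Icc_self ht)) continuousOn_const
    (fun t _ ↦ ?_) (fun _ _ ↦ mem_image_of_mem f (left_mem_Icc.2 hab)) rfl
  simpa only [ha] using hasDerivWithinAt_const t (Ici t) (f a)

theorem eqOn_const_of_deriv_deriv_eq_of_eq_zero {g θ : ℝ → ℝ} (hg : ContDiff ℝ 1 g)
    (hθ : ContDiff ℝ 2 θ) {a b : ℝ} (hθg : ∀ x ∈ Icc a b, deriv (deriv θ) x = g (θ x))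
    (ha : deriv θ a = 0) (hga : g (θ a) = 0) : EqOn θ (fun _ ↦ θ a) (Icc a b) := by
  have hphase : EqOn (fun x ↦ (θ x, deriv θ x)) (fun _ ↦ (θ a, deriv θ a)) (Icc a b) := by
    refine eqOn_const_of_hasDerivAt_of_eq_zero (v := fun p : ℝ × ℝ ↦ (p.2, g p.1)) (by fun_prop)
      (fun x hx ↦ ?_) (by simp [ha, hga])
    rw [← hθg x hx]
    exact (hθ.differentiable two_ne_zero x).hasDerivAt.prodMk
      ((hθ.deriv' (n := 1)).differentiable one_ne_zero x).hasDerivAt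
  exact fun x hx ↦ congrArg Prod.fst (hphase hx)

end Calculus

/-- The energy `∫ (θ'² / 2 + W(θ))` over `[a, b]` of a scalar field `θ` in a potential `W`. -/
noncomputable def fieldEnergy (W : ℝ → ℝ) (a b : ℝ) (θ : ℝ → ℝ) : ℝ :=
  ∫ x in a..b, (deriv θ x ^ 2 / 2 + W (θ x))

namespace fieldEnergy

/-- The first variation of the energy at `θ` in the direction `η`. -/
noncomputable def firstVariation (W : ℝ → ℝ) (a b : ℝ) (θ η : ℝ → ℝ) : ℝ :=
  ∫ x in a..b, (deriv θ x * deriv η x + deriv W (θ x) * η x)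

/-- The second variation of the energy at `θ`, as a symmetric bilinear form in `η` and `ζ`. -/
noncomputable def secondVariation (W : ℝ → ℝ) (a b : ℝ) (θ η ζ : ℝ → ℝ) : ℝ :=
  ∫ x in a..b, (deriv η x * deriv ζ x + deriv (deriv W) (θ x) * η x * ζ x)

variable {W θ η ζ : ℝ → ℝ} {a b : ℝ}

theorem hasDerivAt_add_smul (hW : ContDiff ℝ 1 W) (hθ : ContDiff ℝ 1 θ) (hη : ContDiff ℝ 1 η)
    (a b t : ℝ) :
    HasDerivAt (fun t : ℝ ↦ fieldEnergy W a b (θ + t • η))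
      (firstVariation W a b (θ + t • η) η) t := by
  have hθc := hθ.continuous
  have hηc := hη.continuous
  have hWc := hW.continuous
  have hθd := hθ.differentiable one_ne_zero
  have hηd := hη.differentiable one_ne_zero
  simp only [fieldEnergy, firstVariation, deriv_add_smul hθd hηd, Pi.add_apply, Pi.smul_apply,
    smul_eq_mul]
  refine hasDerivAt_intervalIntegral_of_continuous (fun t ↦ by fun_prop)
    (F' := fun t x ↦ (deriv θ x + t * deriv η x) * deriv η x + deriv W (θ x + t * η x) * η x)
    (by fun_prop) (fun t x ↦ ?_) a b t
  have hpot := (hW.differentiable one_ne_zero (θ x + t * η x)).hasDerivAt.comp t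
    (hasDerivAt_const_add_mul_const (θ x) (η x) t)
  have hkin := ((hasDerivAt_const_add_mul_const (deriv θ x) (deriv η x) t).pow 2).div_const 2
  refine (hkin.add hpot).congr_deriv ?_
  push_cast
  ring

theorem hasDerivAt_firstVariation_add_smul (hW : ContDiff ℝ 2 W) (hθ : ContDiff ℝ 1 θ)
    (hη : ContDiff ℝ 1 η) (hζ : ContDiff ℝ 1 ζ) (a b t : ℝ) :
    HasDerivAt (fun t : ℝ ↦ firstVariation W a b (θ + t • η) ζ)
      (secondVariation W a b (θ + t • η) η ζ) t := by
  have hW₁ : ContDiff ℝ 1 (deriv W) := hW.deriv'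
  have hθc := hθ.continuous
  have hηc := hη.continuous
  have hζc := hζ.continuous
  have hWc := hW₁.continuous
  have hθd := hθ.differentiable one_ne_zero
  have hηd := hη.differentiable one_ne_zero
  simp only [firstVariation, secondVariation, deriv_add_smul hθd hηd, Pi.add_apply, Pi.smul_apply,
    smul_eq_mul]
  refine hasDerivAt_intervalIntegral_of_continuous (fun t ↦ by fun_prop)
    (F' := fun t x ↦ deriv η x * deriv ζ x + deriv (deriv W) (θ x + t * η x) * η x * ζ x)
    (by fun_prop) (fun t x ↦ ?_) a b t
  have hforce := (hW₁.differentiable one_ne_zero (θ x + t * η x)).hasDerivAt.comp t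
    (hasDerivAt_const_add_mul_const (θ x) (η x) t)
  have hvelocity := hasDerivAt_const_add_mul_const (deriv θ x) (deriv η x) t
  exact (hvelocity.mul_const (deriv ζ x)).add (hforce.mul_const (ζ x))

theorem exists_lt_of_secondVariation_neg (hW : ContDiff ℝ 2 W) (hθ : ContDiff ℝ 1 θ)
    (hη : ContDiff ℝ 1 η) (hcrit : firstVariation W a b θ η = 0)
    (hneg : secondVariation W a b θ η η < 0) {δ : ℝ} (hδ : 0 < δ) :
    ∃ φ : ℝ → ℝ, ContDiff ℝ 1 φ ∧ (∀ x ∈ Icc a b, |φ x| + |deriv φ x| < δ) ∧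
      fieldEnergy W a b (θ + φ) < fieldEnergy W a b θ := by
  have hfirst := hasDerivAt_add_smul (hW.of_le one_le_two) hθ hη a b
  have hderiv : deriv (fun t : ℝ ↦ fieldEnergy W a b (θ + t • η)) =
      fun t ↦ firstVariation W a b (θ + t • η) η := funext fun t ↦ (hfirst t).deriv
  have hdecr := eventually_lt_of_deriv_deriv_neg
    (f := fun t : ℝ ↦ fieldEnergy W a b (θ + t • η)) (x₀ := 0)
    (by simpa [hderiv, (hasDerivAt_firstVariation_add_smul hW hθ hη hη a b 0).deriv] using hneg)
    (by simpa [hderiv] using hcrit) (hfirst 0).continuousAt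
  have hsmall := eventually_forall_norm_smul_add_norm_deriv_smul_lt hη
    (isCompact_Icc (a := a) (b := b)) hδ
  obtain ⟨t, hlt, ht⟩ := (hdecr.and (nhdsWithin_le_nhds hsmall)).exists
  exact ⟨t • η, hη.const_smul t, ht, by simpa using hlt⟩

theorem secondVariation_add_smul_self (hW : ContDiff ℝ 2 W) (hθ : Continuous θ)
    (hη : ContDiff ℝ 1 η) (hζ : ContDiff ℝ 1 ζ) (a b s : ℝ) :
    secondVariation W a b θ (η + s • ζ) (η + s • ζ) =
      secondVariation W a b θ η η + 2 * s * secondVariation W a b θ η ζ +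
        s ^ 2 * secondVariation W a b θ ζ ζ := by
  have hηc := hη.continuous
  have hζc := hζ.continuous
  have hηd := hη.differentiable one_ne_zero
  have hζd := hζ.differentiable one_ne_zero
  simp only [secondVariation, ← intervalIntegral.integral_const_mul]
  rw [← intervalIntegral.integral_add, ← intervalIntegral.integral_add]
  · refine intervalIntegral.integral_congr fun x _ ↦ ?_
    simp only [deriv_add_smul hηd hζd, Pi.add_apply, Pi.smul_apply, smul_eq_mul]
    ring
  all_goals exact Continuous.intervalIntegrable (by fun_prop) a b

theorem exists_secondVariation_add_smul_self_neg (hW : ContDiff ℝ 2 W) (hθ : Continuous θ)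
    (hη : ContDiff ℝ 1 η) (hζ : ContDiff ℝ 1 ζ) (hnull : secondVariation W a b θ η η = 0)
    (hne : secondVariation W a b θ η ζ ≠ 0) :
    ∃ s : ℝ, secondVariation W a b θ (η + s • ζ) (η + s • ζ) < 0 := by
  by_contra! hnonneg
  have hdiscrim : discrim (secondVariation W a b θ ζ ζ) (2 * secondVariation W a b θ η ζ) 0 ≤ 0 :=
    discrim_le_zero fun s ↦ by
      have hs := hnonneg s
      rw [secondVariation_add_smul_self hW hθ hη hζ, hnull] at hs
      linarith
  have hpos : 0 < secondVariation W a b θ η ζ ^ 2 := by positivity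
  simp only [discrim] at hdiscrim
  linarith

theorem firstVariation_eq_zero (hθ : ContDiff ℝ 2 θ) (hη : ContDiff ℝ 1 η)
    (hEL : ∀ x ∈ uIcc a b, deriv (deriv θ) x = deriv W (θ x)) (ha : deriv θ a = 0)
    (hb : deriv θ b = 0) : firstVariation W a b θ η = 0 := by
  have hθ₁ : ContDiff ℝ 1 (deriv θ) := hθ.deriv'
  calc firstVariation W a b θ η
      = ∫ x in a..b, (deriv (deriv θ) x * η x + deriv θ x * deriv η x) :=
        intervalIntegral.integral_congr fun x hx ↦ by
          simp only [hEL x hx, add_comm]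
    _ = deriv θ b * η b - deriv θ a * η a :=
        intervalIntegral.integral_deriv_mul_eq_sub
          (fun x _ ↦ (hθ₁.differentiable one_ne_zero x).hasDerivAt)
          (fun x _ ↦ (hη.differentiable one_ne_zero x).hasDerivAt)
          (hθ₁.continuous_deriv_one.intervalIntegrable a b)
          (hη.continuous_deriv_one.intervalIntegrable a b)
    _ = 0 := by simp [ha, hb]

theorem secondVariation_deriv_left (hW : ContDiff ℝ 2 W) (hθ : ContDiff ℝ 1 θ)
    (hζ : ContDiff ℝ 1 ζ) (hEL : ∀ x ∈ uIcc a b, deriv (deriv θ) x = deriv W (θ x)) :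
    secondVariation W a b θ (deriv θ) ζ = deriv W (θ b) * ζ b - deriv W (θ a) * ζ a := by
  have hW₁ : ContDiff ℝ 1 (deriv W) := hW.deriv'
  have hθc := hθ.continuous
  calc secondVariation W a b θ (deriv θ) ζ
      = ∫ x in a..b, (deriv (deriv W) (θ x) * deriv θ x * ζ x + deriv W (θ x) * deriv ζ x) :=
        intervalIntegral.integral_congr fun x hx ↦ by
          simp only [hEL x hx, add_comm]
    _ = deriv W (θ b) * ζ b - deriv W (θ a) * ζ a :=
        intervalIntegral.integral_deriv_mul_eq_sub (u := fun x ↦ deriv W (θ x))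
          (fun x _ ↦ (hW₁.differentiable one_ne_zero (θ x)).hasDerivAt.comp x
            (hθ.differentiable one_ne_zero x).hasDerivAt)
          (fun x _ ↦ (hζ.differentiable one_ne_zero x).hasDerivAt)
          (Continuous.intervalIntegrable (by fun_prop) a b)
          (hζ.continuous_deriv_one.intervalIntegrable a b)

theorem exists_secondVariation_neg (hW : ContDiff ℝ 2 W) (hθ : ContDiff ℝ 2 θ)
    (hEL : ∀ x ∈ uIcc a b, deriv (deriv θ) x = deriv W (θ x)) (ha : deriv θ a = 0)
    (hb : deriv θ b = 0) (hab : a ≠ b) (hWa : deriv W (θ a) ≠ 0) :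
    ∃ η : ℝ → ℝ, ContDiff ℝ 1 η ∧ secondVariation W a b θ η η < 0 := by
  have hθ₁ : ContDiff ℝ 1 (deriv θ) := hθ.deriv'
  have hζ : ContDiff ℝ 1 fun x ↦ b - x := by fun_prop
  have hpair {ζ : ℝ → ℝ} (hζ : ContDiff ℝ 1 ζ) :=
    secondVariation_deriv_left hW (hθ.of_le one_le_two) hζ hEL
  have hnull : secondVariation W a b θ (deriv θ) (deriv θ) = 0 := by simp [hpair hθ₁, ha, hb]
  have hne : secondVariation W a b θ (deriv θ) (fun x ↦ b - x) ≠ 0 := by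
    simp [hpair hζ, hWa, sub_ne_zero, hab.symm]
  obtain ⟨s, hs⟩ :=
    exists_secondVariation_add_smul_self_neg hW hθ.continuous hθ₁ hζ hnull hne
  exact ⟨_, hθ₁.add (hζ.const_smul s), hs⟩

end fieldEnergy

theorem deriv_const_mul_cos_two_mul (ε x : ℝ) :
    deriv (fun x ↦ ε * Real.cos (2 * x)) x = -(2 * ε * Real.sin (2 * x)) := by
  have hcos := (((hasDerivAt_id' x).const_mul 2).cos).const_mul ε
  rw [hcos.deriv]
  ring

open fieldEnergy in
theorem stmt_10_general {W : ℝ → ℝ} (hW : ContDiff ℝ 2 W) {a b : ℝ} {θ : ℝ → ℝ}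
    (hθ : ContDiff ℝ 2 θ) (hnc : ∃ x ∈ Icc a b, ∃ y ∈ Icc a b, θ x ≠ θ y)
    (hEL : ∀ x ∈ Icc a b, deriv (deriv θ) x = deriv W (θ x))
    (ha : deriv θ a = 0) (hb : deriv θ b = 0) :
    ∀ δ > 0, ∃ φ : ℝ → ℝ, ContDiff ℝ 1 φ ∧
      (∀ x ∈ Icc a b, |φ x| + |deriv φ x| < δ) ∧
      fieldEnergy W a b (θ + φ) < fieldEnergy W a b θ := by
  intro δ hδ
  obtain ⟨x, hx, y, hy, hxy⟩ := hnc
  have hab : a < b := by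
    by_contra! hba
    exact hxy (congrArg θ (subsingleton_Icc_of_ge hba hx hy))
  have hWa : deriv W (θ a) ≠ 0 := fun hWa ↦
    have hconst := eqOn_const_of_deriv_deriv_eq_of_eq_zero hW.deriv' hθ hEL ha hWa
    hxy ((hconst hx).trans (hconst hy).symm)
  rw [← uIcc_of_le hab.le] at hEL
  obtain ⟨η, hη, hneg⟩ := exists_secondVariation_neg hW hθ hEL ha hb hab.ne hWa
  have hcrit := firstVariation_eq_zero hθ hη hEL ha hb
  exact exists_lt_of_secondVariation_neg hW (hθ.of_le one_le_two) hη hcrit hneg hδ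

/-- All (multiple-)perversion equilibria of the ladder with `Û₀ = 0`, i.e. the
nonconstant equilibria taking values in `(-π/2, π/2)`, are unstable. -/
theorem stmt_10 (ε L : ℝ) (hε : 0 < ε) (hL : 0 < L)
    (θ : ℝ → ℝ) (hθ : ContDiff ℝ 2 θ)
    (hnc : ∃ R₁ ∈ Set.Icc 0 L, ∃ R₂ ∈ Set.Icc 0 L, θ R₁ ≠ θ R₂)
    (hEL : ∀ R ∈ Set.Icc 0 L, deriv (deriv θ) R + 2 * ε * Real.sin (2 * θ R) = 0)
    (hb0 : deriv θ 0 = 0) (hbL : deriv θ L = 0)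
    (hrange : ∀ R ∈ Set.Icc 0 L,
      -(Real.pi / 2) < θ R ∧ θ R < Real.pi / 2) :
    ∀ δ > 0, ∃ φ : ℝ → ℝ, ContDiff ℝ 1 φ ∧
      (∀ R ∈ Set.Icc 0 L, |φ R| + |deriv φ R| < δ) ∧
      ladderEnergy ε L (θ + φ) < ladderEnergy ε L θ :=
  stmt_10_general (W := fun x ↦ ε * Real.cos (2 * x)) (by fun_prop) hθ hnc
    (fun R hR ↦ by linarith [hEL R hR, deriv_const_mul_cos_two_mul ε (θ R)]) hb0 hbL
end

section
/- Define k : (0, ∞) → ℝ by k(ν) = (1+ν)^{−1/2} · ∫_0^{π/2} ( 1 − sin²(t)/(1+ν) )^{−1/2} dt. Then k(ν) − log(4/√ν) tends to 0 as ν → 0⁺. (This is the long-ladder asymptotic k(ν) ≈ log(4/√ν) for ν ≪ 1.) -/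
open Filter

/-- `k(ν) = K(1/(1+ν))/√(1+ν)`, with the complete elliptic integral of the first
kind written directly as an integral. -/
noncomputable def kFun (ν : ℝ) : ℝ :=
  (1 / Real.sqrt (1 + ν)) *
    ∫ t in (0 : ℝ)..(Real.pi / 2), 1 / Real.sqrt (1 - Real.sin t ^ 2 / (1 + ν))

/-!
Absorbing the prefactor, `k(ν) = ∫₀^{π/2} dt / √(ν + cos² t)`, whose integrand degenerates at
`π/2` as `ν → 0`. Split the numerator as `1 = sin t + (1 - sin t)`. The `sin t` part carries the
singularity and is elementary: it equals `arsinh (1/√ν) = log (2/√ν) + o(1)`. In the other part the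
numerator vanishes where `cos t` does, so the limit passes under the integral, giving
`∫₀^{π/2} (1 - sin t) / cos t dt = ∫₀^{π/2} cos t / (1 + sin t) dt = log 2`.
-/

open MeasureTheory Real Set Topology

theorem continuous_div_sqrt_add_sq {X : Type*} [TopologicalSpace X] {f g : X → ℝ} {ν : ℝ}
    (hf : Continuous f) (hg : Continuous g) (hν : 0 < ν) :
    Continuous fun x => f x / √(ν + g x ^ 2) :=
  hf.div (by fun_prop) fun x => by positivity

theorem tendsto_div_sqrt_add_sq {x y : ℝ} (h : y = 0 → x = 0) :
    Tendsto (fun ν => x / √(ν + y ^ 2)) (𝓝 0) (𝓝 (x / |y|)) := by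
  by_cases hy : y = 0
  · simp [h hy]
  · have hcont : ContinuousAt (fun ν => x / √(ν + y ^ 2)) 0 :=
      continuousAt_const.div (by fun_prop) (by positivity)
    simpa only [ContinuousAt, zero_add, sqrt_sq_eq_abs] using hcont

theorem norm_div_sqrt_add_sq_le {x y ν : ℝ} (h : y = 0 → x = 0) (hν : 0 ≤ ν) :
    ‖x / √(ν + y ^ 2)‖ ≤ ‖x / |y|‖ := by
  by_cases hy : y = 0
  · simp [h hy]
  · have hle : |y| ≤ √(ν + y ^ 2) := abs_le_sqrt (by linarith)
    rw [norm_div, norm_div, norm_of_nonneg (sqrt_nonneg _), norm_of_nonneg (abs_nonneg y)]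
    gcongr

theorem tendsto_integral_div_sqrt_add_sq {α : Type*} [MeasurableSpace α] {μ : Measure α}
    {f g : α → ℝ} (hf : AEMeasurable f μ) (hg : AEMeasurable g μ)
    (hfg : ∀ᵐ x ∂μ, g x = 0 → f x = 0) (hfg_int : Integrable (fun x => f x / |g x|) μ) :
    Tendsto (fun ν => ∫ x, f x / √(ν + g x ^ 2) ∂μ) (𝓝[>] 0) (𝓝 (∫ x, f x / |g x| ∂μ)) := by
  refine tendsto_integral_filter_of_dominated_convergence (fun x => ‖f x / |g x|‖) ?_ ?_
    hfg_int.norm ?_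
  · exact .of_forall fun ν => (hf.div ((hg.pow_const 2).const_add ν).sqrt).aestronglyMeasurable
  · filter_upwards [self_mem_nhdsWithin] with ν hν
    filter_upwards [hfg] with x hx
    exact norm_div_sqrt_add_sq_le hx (mem_Ioi.1 hν).le
  · filter_upwards [hfg] with x hx
    exact (tendsto_div_sqrt_add_sq hx).mono_left nhdsWithin_le_nhds

theorem arsinh_sub_log_two_mul {x : ℝ} (hx : 0 < x) :
    arsinh x - log (2 * x) = log ((1 + √(1 + x⁻¹ ^ 2)) / 2) := by
  have hfactor : √(1 + x ^ 2) = x * √(1 + x⁻¹ ^ 2) := by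
    rw [show 1 + x ^ 2 = x ^ 2 * (1 + x⁻¹ ^ 2) by field_simp; ring, sqrt_mul (sq_nonneg x),
      sqrt_sq hx.le]
  rw [arsinh, ← log_div (by positivity) (by positivity), hfactor]
  congr 1
  field_simp

theorem tendsto_arsinh_sub_log_two_mul_atTop :
    Tendsto (fun x => arsinh x - log (2 * x)) atTop (𝓝 0) := by
  have hcont : ContinuousAt (fun y : ℝ => log ((1 + √(1 + y ^ 2)) / 2)) 0 :=
    ContinuousAt.log (by fun_prop) (by positivity)
  have hzero : log ((1 + √(1 + (0 : ℝ) ^ 2)) / 2) = 0 := by norm_num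
  have hlim := hcont.tendsto.comp tendsto_inv_atTop_zero
  rw [hzero] at hlim
  refine hlim.congr' ?_
  filter_upwards [eventually_gt_atTop 0] with x hx
  exact (arsinh_sub_log_two_mul hx).symm

theorem integral_sin_div_sqrt_add_cos_sq {ν : ℝ} (hν : 0 < ν) (a b : ℝ) :
    ∫ t in a..b, sin t / √(ν + cos t ^ 2) = arsinh (cos a / √ν) - arsinh (cos b / √ν) := by
  have hderiv (t : ℝ) :
      HasDerivAt (fun t => -arsinh (cos t / √ν)) (sin t / √(ν + cos t ^ 2)) t := by
    have hfactor : √(ν + cos t ^ 2) = √ν * √(1 + (cos t / √ν) ^ 2) := by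
      rw [← sqrt_mul hν.le, div_pow, sq_sqrt hν.le]
      congr 1
      field_simp
    refine ((hasDerivAt_cos t).div_const √ν).arsinh.neg.congr_deriv ?_
    rw [hfactor, smul_eq_mul]
    field_simp
  rw [intervalIntegral.integral_eq_sub_of_hasDerivAt (fun t _ => hderiv t)
    ((continuous_div_sqrt_add_sq continuous_sin continuous_cos hν).intervalIntegrable a b)]
  ring

-- At the zeros of `cos` both sides are `0`, by the convention `x / 0 = 0`.
theorem one_sub_sin_div_cos (t : ℝ) : (1 - sin t) / cos t = cos t / (1 + sin t) := by
  by_cases hcos : cos t = 0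
  · simp [hcos]
  · have hsq : (1 - sin t) * (1 + sin t) = cos t * cos t := by
      linear_combination -sin_sq_add_cos_sq t
    have hsin : 1 + sin t ≠ 0 := right_ne_zero_of_mul (hsq ▸ mul_ne_zero hcos hcos)
    rwa [div_eq_div_iff hcos hsin]

theorem neg_one_lt_sin_of_mem_Ioc {t : ℝ} (ht : t ∈ Ioc (-(π / 2)) (π / 2)) : -1 < sin t := by
  simpa only [sin_neg, sin_pi_div_two] using sin_lt_sin_of_lt_of_le_pi_div_two le_rfl ht.2 ht.1

theorem intervalIntegrable_cos_div_one_add_sin {a b : ℝ}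
    (h : ∀ t ∈ uIcc a b, 1 + sin t ≠ 0) :
    IntervalIntegrable (fun t => cos t / (1 + sin t)) volume a b :=
  (continuousOn_cos.div (by fun_prop) h).intervalIntegrable

theorem integral_cos_div_one_add_sin {a b : ℝ} (h : ∀ t ∈ uIcc a b, 1 + sin t ≠ 0) :
    ∫ t in a..b, cos t / (1 + sin t) = log (1 + sin b) - log (1 + sin a) :=
  intervalIntegral.integral_eq_sub_of_hasDerivAt
    (fun t ht => ((hasDerivAt_sin t).const_add 1).log (h t ht))
    (intervalIntegrable_cos_div_one_add_sin h)

theorem tendsto_integral_one_sub_sin_div_sqrt_add_cos_sq {a b : ℝ} (ha : -(π / 2) < a)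
    (hab : a ≤ b) (hb : b ≤ π / 2) :
    Tendsto (fun ν => ∫ t in a..b, (1 - sin t) / √(ν + cos t ^ 2)) (𝓝[>] 0)
      (𝓝 (log (1 + sin b) - log (1 + sin a))) := by
  have hsin : ∀ t ∈ Icc a b, -1 < sin t := fun t ht =>
    neg_one_lt_sin_of_mem_Ioc ⟨ha.trans_le ht.1, ht.2.trans hb⟩
  have hne : ∀ t ∈ uIcc a b, 1 + sin t ≠ 0 := by
    intro t ht
    linarith [hsin t (uIcc_of_le hab ▸ ht)]
  have hlimit : EqOn (fun t => cos t / (1 + sin t)) (fun t => (1 - sin t) / |cos t|)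
      (Ioc a b) := by
    intro t ht
    have hcos : 0 ≤ cos t :=
      cos_nonneg_of_neg_pi_div_two_le_of_le (ha.trans ht.1).le (ht.2.trans hb)
    simp only [abs_of_nonneg hcos, one_sub_sin_div_cos]
  have hzero : ∀ t ∈ Ioc a b, cos t = 0 → 1 - sin t = 0 := by
    intro t ht hcos
    have hsin_ne : sin t ≠ -1 := (hsin t (Ioc_subset_Icc_self ht)).ne'
    rw [(cos_eq_zero_iff_sin_eq.1 hcos).resolve_right hsin_ne, sub_self]
  rw [← integral_cos_div_one_add_sin hne]
  simp only [intervalIntegral.integral_of_le hab]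
  rw [setIntegral_congr_fun measurableSet_Ioc hlimit]
  refine tendsto_integral_div_sqrt_add_sq (by fun_prop) (by fun_prop)
    (ae_restrict_of_forall_mem measurableSet_Ioc hzero) ?_
  exact ((intervalIntegrable_iff_integrableOn_Ioc_of_le hab).1
    (intervalIntegrable_cos_div_one_add_sin hne)).congr_fun hlimit measurableSet_Ioc

theorem kFun_eq_integral {ν : ℝ} (hν : -1 < ν) :
    kFun ν = ∫ t in 0..π / 2, 1 / √(ν + cos t ^ 2) := by
  have hpos : 0 < 1 + ν := by linarith
  rw [kFun, ← intervalIntegral.integral_const_mul]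
  congr 1 with t
  have hradicand : (1 + ν) * (1 - sin t ^ 2 / (1 + ν)) = ν + cos t ^ 2 := by
    rw [cos_sq']
    field_simp
    ring
  rw [one_div_mul_one_div, ← sqrt_mul hpos.le, hradicand]

theorem kFun_eq_arsinh_add_integral {ν : ℝ} (hν : 0 < ν) :
    kFun ν = arsinh (1 / √ν) + ∫ t in 0..π / 2, (1 - sin t) / √(ν + cos t ^ 2) := by
  have hintegrable {f : ℝ → ℝ} (hf : Continuous f) :
      IntervalIntegrable (fun t => f t / √(ν + cos t ^ 2)) volume 0 (π / 2) :=
    (continuous_div_sqrt_add_sq hf continuous_cos hν).intervalIntegrable _ _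
  calc
    kFun ν = ∫ t in 0..π / 2, (sin t / √(ν + cos t ^ 2) + (1 - sin t) / √(ν + cos t ^ 2)) := by
      simp only [kFun_eq_integral (by linarith : -1 < ν), ← add_div, add_sub_cancel]
    _ = (∫ t in 0..π / 2, sin t / √(ν + cos t ^ 2)) +
          ∫ t in 0..π / 2, (1 - sin t) / √(ν + cos t ^ 2) :=
      intervalIntegral.integral_add (hintegrable continuous_sin) (hintegrable (by fun_prop))
    _ = arsinh (1 / √ν) + ∫ t in 0..π / 2, (1 - sin t) / √(ν + cos t ^ 2) := by
      simp [integral_sin_div_sqrt_add_cos_sq hν]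

/-- Long-ladder asymptotics: `k(ν) - log(4/√ν) → 0` as `ν → 0⁺`. -/
theorem stmt_16 :
    Tendsto (fun ν => kFun ν - Real.log (4 / Real.sqrt ν))
      (nhdsWithin 0 (Set.Ioi (0 : ℝ))) (nhds 0) := by
  have hinv : Tendsto (fun ν : ℝ => 1 / √ν) (𝓝[>] 0) atTop := by
    simpa only [one_div, sqrt_inv, Function.comp_def] using
      tendsto_sqrt_atTop.comp (tendsto_inv_nhdsGT_zero (𝕜 := ℝ))
  have hsingular : Tendsto (fun ν => arsinh (1 / √ν) - log (2 * (1 / √ν))) (𝓝[>] 0) (𝓝 0) :=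
    tendsto_arsinh_sub_log_two_mul_atTop.comp hinv
  have hregular : Tendsto (fun ν => ∫ t in 0..π / 2, (1 - sin t) / √(ν + cos t ^ 2))
      (𝓝[>] 0) (𝓝 (log 2)) := by
    simpa [one_add_one_eq_two] using tendsto_integral_one_sub_sin_div_sqrt_add_cos_sq
      (a := 0) (b := π / 2) (by linarith [pi_pos]) pi_div_two_pos.le le_rfl
  have hsum := hsingular.add (hregular.sub_const (log 2))
  rw [sub_self, add_zero] at hsum
  refine hsum.congr' ?_
  filter_upwards [self_mem_nhdsWithin] with ν hν
  have hsqrt : 0 < √ν := sqrt_pos.2 hν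
  have hlog : log (4 / √ν) = log 2 + log (2 * (1 / √ν)) := by
    rw [← log_mul (by positivity) (by positivity)]
    ring_nf
  rw [kFun_eq_arsinh_add_integral hν, hlog]
  ring
end
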